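/- There exist absolute constants c > 0 and c' > 0 such that the following holds for every ε ∈ (0,1) and every δ ∈ (0, c'ε). Let B := (1/δ)·log(1 + (ε/2)/(1−ε/2)) and suppose g : ℝ → [0,∞) is measurable with (1−ε)·φ(x−δ) ≤ g(x) ≤ φ(x−δ) for all x ∈ ℝ, ∫_ℝ g(x) dx = 1−ε/2, and g(x) = (1−ε/2)·φ(x) for all x ∈ [−B+δ/2, B+δ/2]. Then, setting γ := (1/δ)·log(1 + (ε/2)/(1−ε/2)) and m := ⌊c·γ²/log γ⌋, there exists a (real) polynomial p such that the function f(x) := g(x) + p(x)·1{|x| ≤ 1} satisfies (1−ε)·φ(x−δ) ≤ f(x) ≤ φ(x−δ) for all x ∈ ℝ, and ∫_ℝ xⁱ f(x) dx / ∫_ℝ f(x) dx = E_{z∼N(0,1)}[zⁱ] for every integer i with 1 ≤ i ≤ m. -/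

import Mathlib

open MeasureTheory

/-- The probability density function of the standard Gaussian `N(0,1)`. -/
noncomputable def gaussPDF (x : ℝ) : ℝ := Real.exp (-x ^ 2 / 2) / Real.sqrt (2 * Real.pi)

/-- `B(ε,δ) = γ(ε,δ) = (1/δ)·log(1 + (ε/2)/(1−ε/2))`. -/
noncomputable def Bconst (ε δ : ℝ) : ℝ := (1 / δ) * Real.log (1 + (ε / 2) / (1 - ε / 2))

/-!
Write `h = (1 - ε/2) φ - g`. It suffices to find a polynomial `p` whose moments over `[-1, 1]` are
those of `h` up to order `m`, and which is so small on `[-1, 1]` that adding it stays within the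
slack between `(1 - ε) φ(x - δ)` and `φ(x - δ)`, where `g = (1 - ε/2) φ`.

Such a `p` is the Riesz representative in `L²(-1, 1)`, among polynomials of degree at most `m`, of
the functional `q ↦ ∫ q h`. A polynomial of degree at most `m` grows off `[-1, 1]` by at most a
factor `m^O(m) max(1, |x|)ᵐ` relative to its `L²(-1, 1)` norm, so `p` is bounded on `[-1, 1]` by
`m^O(m) ∫ max(1, |x|)ᵐ |h|`. As `h` vanishes for `|x| < B/2` and is at most `ε exp(-x²/4)` beyond,
this is `ε exp(O(m log B) - Ω(B²))`, hence at most `ε / 20` as soon as `m log B` is at most a small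
multiple of `B²`.
-/

section PolynomialGrowth

open Polynomial

lemma exists_mem_Icc_mul_sub_le_integral {f : ℝ → ℝ} {a b c d : ℝ} (hca : c ≤ a) (hab : a < b)
    (hbd : b ≤ d) (hf : ContinuousOn f (Set.Icc c d)) (hf0 : ∀ x ∈ Set.Icc c d, 0 ≤ f x) :
    ∃ y ∈ Set.Icc a b, f y * (b - a) ≤ ∫ x in c..d, f x := by
  have hcd : c ≤ d := hca.trans (hab.le.trans hbd)
  have hsub : Set.uIcc a b ⊆ Set.Icc c d := by
    rw [Set.uIcc_of_le hab.le]; exact Set.Icc_subset_Icc hca hbd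
  obtain ⟨y, hy, hfy⟩ := exists_eq_interval_average hab.ne (hf.mono hsub)
  rw [interval_average_eq_div, eq_div_iff (sub_pos.2 hab).ne'] at hfy
  refine ⟨y, Set.uIcc_of_le hab.le ▸ Set.uIoo_subset_uIcc_self hy, hfy.trans_le ?_⟩
  refine intervalIntegral.integral_mono_interval hca hab.le hbd ?_
    (hf.intervalIntegrable_of_Icc hcd)
  exact ae_restrict_of_forall_mem measurableSet_Ioc
    fun x hx ↦ hf0 x (Set.Ioc_subset_Icc_self hx)

/-- Cut `[a, b]` into `2n` equal pieces and choose a mean value point in every other one. -/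
lemma exists_separated_nodes_mul_le_integral {f : ℝ → ℝ} {a b : ℝ} (hab : a < b)
    (hf : ContinuousOn f (Set.Icc a b)) (hf0 : ∀ x ∈ Set.Icc a b, 0 ≤ f x) (n : ℕ) :
    ∃ v : Fin n → ℝ, (∀ k, v k ∈ Set.Icc a b) ∧
      (Pairwise fun i j ↦ (b - a) / (2 * n) ≤ |v i - v j|) ∧
      ∀ k, f (v k) * ((b - a) / (2 * n)) ≤ ∫ x in a..b, f x := by
  rcases n.eq_zero_or_pos with rfl | hn
  · exact ⟨0, fun k ↦ k.elim0, fun k ↦ k.elim0, fun k ↦ k.elim0⟩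
  set ℓ : ℝ := (b - a) / (2 * n) with hℓ
  have hℓ0 : 0 < ℓ := div_pos (sub_pos.2 hab) (by positivity)
  have hb : b = a + 2 * n * ℓ := by rw [hℓ]; field_simp; ring
  have hleft (k : Fin n) : a ≤ a + 2 * k * ℓ := le_add_of_nonneg_right (by positivity)
  have hright (k : Fin n) : a + (2 * k + 1) * ℓ ≤ b := by
    have hk : (k : ℝ) + 1 ≤ n := by exact_mod_cast k.2
    rw [hb]; gcongr; linarith
  have hpiece (k : Fin n) : ∃ y ∈ Set.Icc (a + 2 * k * ℓ) (a + (2 * k + 1) * ℓ),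
      f y * ℓ ≤ ∫ x in a..b, f x := by
    have h := exists_mem_Icc_mul_sub_le_integral (hleft k) (by linarith) (hright k) hf hf0
    rwa [show a + (2 * k + 1) * ℓ - (a + 2 * k * ℓ) = ℓ by ring] at h
  choose v hv hvf using hpiece
  have hsep {i j : Fin n} (hij : i < j) : ℓ ≤ v j - v i := by
    have hij' : (i : ℝ) + 1 ≤ j := by exact_mod_cast hij
    nlinarith [(hv i).2, (hv j).1]
  refine ⟨v, fun k ↦ ⟨(hleft k).trans (hv k).1, (hv k).2.trans (hright k)⟩, fun i j hij ↦ ?_, hvf⟩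
  rcases hij.lt_or_gt with h | h
  · exact abs_sub_comm (v i) (v j) ▸ (hsep h).trans (le_abs_self _)
  · exact (hsep h).trans (le_abs_self _)

lemma abs_eval_le_of_separated_nodes {ι : Type*} {s : Finset ι} {v : ι → ℝ}
    {p : ℝ[X]} {d M R x : ℝ} (hp : p.degree < s.card) (hd : 0 < d)
    (hsep : ∀ i ∈ s, ∀ j ∈ s, i ≠ j → d ≤ |v i - v j|) (hM : ∀ i ∈ s, |p.eval (v i)| ≤ M)
    (hR : ∀ i ∈ s, |x - v i| ≤ R) :
    |p.eval x| ≤ s.card * (M * (R / d) ^ (s.card - 1)) := by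
  classical
  have hinj : Set.InjOn v s := fun i hi j hj hij ↦ by
    by_contra hne
    exact hd.not_ge (by simpa [hij] using hsep i hi j hj hne)
  have heval : p.eval x =
      ∑ i ∈ s, p.eval (v i) * ∏ j ∈ s.erase i, ((v i - v j)⁻¹ * (x - v j)) := by
    conv_lhs => rw [Lagrange.eq_interpolate hinj hp]
    simp [Lagrange.interpolate_apply, eval_finsetSum, Lagrange.basis, eval_prod,
      Lagrange.basisDivisor]
  have hfactor {i j : ι} (hi : i ∈ s) (hj : j ∈ s.erase i) :
      |(v i - v j)⁻¹ * (x - v j)| ≤ R / d := by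
    have hj' := Finset.mem_erase.1 hj
    rw [abs_mul, abs_inv, inv_mul_eq_div]
    exact div_le_div₀ ((abs_nonneg _).trans (hR j hj'.2)) (hR j hj'.2) hd
      (hsep i hi j hj'.2 hj'.1.symm)
  have hterm : ∀ i ∈ s, |p.eval (v i) * ∏ j ∈ s.erase i, ((v i - v j)⁻¹ * (x - v j))| ≤
      M * (R / d) ^ (s.card - 1) := fun i hi ↦ by
    rw [abs_mul, Finset.abs_prod, ← Finset.card_erase_of_mem hi]
    exact mul_le_mul (hM i hi)
      ((Finset.prod_le_prod (fun _ _ ↦ abs_nonneg _) fun j hj ↦ hfactor hi hj).trans_eq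
        (Finset.prod_const _))
      (Finset.prod_nonneg fun _ _ ↦ abs_nonneg _) ((abs_nonneg _).trans (hM i hi))
  calc |p.eval x| ≤ _ := heval ▸ Finset.abs_sum_le_sum_abs _ _
    _ ≤ s.card • (M * (R / d) ^ (s.card - 1)) := Finset.sum_le_card_nsmul _ _ _ hterm
    _ = s.card * (M * (R / d) ^ (s.card - 1)) := nsmul_eq_mul _ _

/-- An explicit constant in the Nikolskii-type inequality bounding a polynomial of degree at most
`m` on the whole line by its `L²` norm on `[-1, 1]`; see `abs_eval_le_nikolskiiConst_mul`. -/
noncomputable def nikolskiiConst (m : ℕ) : ℝ := (2 * (m + 1)) ^ (m + 2)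

lemma abs_eval_le_nikolskiiConst_mul {m : ℕ} {p : ℝ[X]} (hp : p.degree < (m + 1 : ℕ)) (x : ℝ) :
    |p.eval x| ≤ nikolskiiConst m * √(∫ t in (-1 : ℝ)..1, p.eval t ^ 2) * max 1 |x| ^ m := by
  set S := ∫ t in (-1 : ℝ)..1, p.eval t ^ 2
  set w := max 1 |x|
  set n : ℝ := m + 1 with hn
  have hn1 : 1 ≤ n := by simp [hn]
  have hlen : ((1 : ℝ) - -1) / (2 * (m + 1 : ℕ)) = n⁻¹ := by
    rw [Nat.cast_succ, ← hn]; field_simp; norm_num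
  obtain ⟨v, hv, hsep, hvS⟩ := exists_separated_nodes_mul_le_integral (f := fun t ↦ p.eval t ^ 2)
    (by norm_num : (-1 : ℝ) < 1) (by fun_prop) (fun _ _ ↦ sq_nonneg _) (m + 1)
  simp only [hlen] at hsep hvS
  have hnode (k : Fin (m + 1)) : |p.eval (v k)| ≤ n * √S := by
    have hS0 : 0 ≤ S := (by positivity : 0 ≤ p.eval (v k) ^ 2 * n⁻¹).trans (hvS k)
    have hk : p.eval (v k) ^ 2 ≤ S * n := by
      simpa [← div_eq_mul_inv, div_le_iff₀ (by positivity : 0 < n)] using hvS k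
    refine abs_le_of_sq_le_sq (hk.trans ?_) (by positivity)
    rw [mul_pow, Real.sq_sqrt hS0]
    nlinarith
  have hdist (k : Fin (m + 1)) : |x - v k| ≤ 2 * w := by
    have hvk : |v k| ≤ 1 := abs_le.2 (hv k)
    linarith [abs_sub x (v k), le_max_left 1 |x|, le_max_right 1 |x|]
  have hbound := abs_eval_le_of_separated_nodes (s := Finset.univ) (by simpa using hp)
    (by positivity : 0 < n⁻¹) (fun i _ j _ hij ↦ hsep hij) (fun k _ ↦ hnode k) (fun k _ ↦ hdist k)
  calc |p.eval x| ≤ n * (n * √S * (2 * w / n⁻¹) ^ m) := by simpa [hn] using hbound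
    _ = n ^ 2 * (2 * n) ^ m * √S * w ^ m := by
      rw [div_inv_eq_mul, mul_right_comm 2, mul_pow _ w]; ring
    _ ≤ (2 * n) ^ 2 * (2 * n) ^ m * √S * w ^ m := by gcongr; linarith
    _ = nikolskiiConst m * √S * w ^ m := by rw [nikolskiiConst, ← hn]; ring

end PolynomialGrowth

section PolynomialMoments

open Polynomial

/-- The `L²(a, b)` inner product of real polynomials, as a bilinear form. -/
noncomputable def polynomialL2Form (a b : ℝ) : LinearMap.BilinForm ℝ ℝ[X] :=
  LinearMap.mk₂ ℝ (fun p q ↦ ∫ x in a..b, p.eval x * q.eval x)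
    (fun p₁ p₂ q ↦ by
      simp only [eval_add, add_mul]
      exact intervalIntegral.integral_add (Continuous.intervalIntegrable (by fun_prop) _ _)
        (Continuous.intervalIntegrable (by fun_prop) _ _))
    (fun c p q ↦ by simp [mul_assoc])
    (fun p q₁ q₂ ↦ by
      simp only [eval_add, mul_add]
      exact intervalIntegral.integral_add (Continuous.intervalIntegrable (by fun_prop) _ _)
        (Continuous.intervalIntegrable (by fun_prop) _ _))
    (fun c p q ↦ by simp [mul_left_comm])

lemma polynomialL2Form_apply (a b : ℝ) (p q : ℝ[X]) :
    polynomialL2Form a b p q = ∫ x in a..b, p.eval x * q.eval x := rfl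

lemma polynomialL2Form_self_pos {a b : ℝ} (hab : a < b) {p : ℝ[X]} (hp : p ≠ 0) :
    0 < polynomialL2Form a b p p := by
  obtain ⟨c, hc, hpc⟩ : ∃ c ∈ Set.Icc a b, p.eval c ≠ 0 := by
    by_contra! h
    exact hp (p.eq_zero_of_infinite_isRoot ((Set.Icc_infinite hab).mono h))
  exact intervalIntegral.integral_pos hab (by fun_prop) (fun x _ ↦ mul_self_nonneg _)
    ⟨c, hc, mul_self_pos.2 hpc⟩

lemma exists_polynomialL2Form_eq {a b : ℝ} (hab : a < b) (W : Submodule ℝ ℝ[X])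
    [FiniteDimensional ℝ W] (L : Module.Dual ℝ W) :
    ∃ p ∈ W, ∀ q : W, polynomialL2Form a b p q = L q := by
  have hnondeg : ((polynomialL2Form a b).restrict W).Nondegenerate := by
    refine .ofSeparatingLeft fun p hp ↦ ?_
    by_contra hp0
    exact (polynomialL2Form_self_pos hab (by simpa using hp0)).ne' (hp p)
  exact ⟨_, Submodule.coe_mem _, LinearMap.BilinForm.apply_toDual_symm_apply (hB := hnondeg) L⟩

lemma integrable_eval_mul {m : ℕ} {h : ℝ → ℝ} (hh : Integrable fun x ↦ max 1 |x| ^ m * h x)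
    {p : ℝ[X]} (hp : p.degree < (m + 1 : ℕ)) : Integrable fun x ↦ p.eval x * h x := by
  have hbdd := hh.bdd_mul (f := fun x ↦ p.eval x / max 1 |x| ^ m)
    (c := nikolskiiConst m * √(∫ t in (-1 : ℝ)..1, p.eval t ^ 2))
    (Measurable.aestronglyMeasurable (by fun_prop)) (.of_forall fun x ↦ ?_)
  · refine hbdd.congr (.of_forall fun x ↦ ?_)
    have : max 1 |x| ≠ 0 := by positivity
    field_simp
  · rw [Real.norm_eq_abs, abs_div, abs_of_nonneg (by positivity : 0 ≤ max 1 |x| ^ m),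
      div_le_iff₀ (by positivity)]
    exact abs_eval_le_nikolskiiConst_mul hp x

/-- The bound is by duality: testing the moment identities against `p` itself gives
`‖p‖² = ∫ p h ≤ C ‖p‖ ∫ max(1, |x|)ᵐ |h|` in `L²(-1, 1)`. -/
lemma exists_polynomial_moments_eq_abs_le {m : ℕ} {h : ℝ → ℝ}
    (hh : Integrable fun x ↦ max 1 |x| ^ m * h x) :
    ∃ p : ℝ[X], (∀ i ≤ m, ∫ x in (-1 : ℝ)..1, x ^ i * p.eval x = ∫ x, x ^ i * h x) ∧
      ∀ x, |x| ≤ 1 → |p.eval x| ≤ nikolskiiConst m ^ 2 * ∫ x, |max 1 |x| ^ m * h x| := by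
  have hint (q : degreeLT ℝ (m + 1)) : Integrable fun x ↦ q.1.eval x * h x :=
    integrable_eval_mul hh (mem_degreeLT.1 q.2)
  let L : Module.Dual ℝ (degreeLT ℝ (m + 1)) :=
    { toFun := fun q ↦ ∫ x, q.1.eval x * h x
      map_add' := fun q r ↦ by
        simpa [add_mul] using integral_add (hint q) (hint r)
      map_smul' := fun c q ↦ by simp [mul_assoc, integral_const_mul] }
  have : FiniteDimensional ℝ (degreeLT ℝ (m + 1)) :=
    (degreeLTEquiv ℝ (m + 1)).symm.finiteDimensional
  obtain ⟨p, hp, hpL⟩ := exists_polynomialL2Form_eq (by norm_num : (-1 : ℝ) < 1) _ L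
  set C := nikolskiiConst m
  have hC : 0 ≤ C := by unfold C nikolskiiConst; positivity
  set S := ∫ x in (-1 : ℝ)..1, p.eval x ^ 2
  set I := ∫ x, |max 1 |x| ^ m * h x|
  have hgrowth := abs_eval_le_nikolskiiConst_mul (mem_degreeLT.1 hp)
  have hself : S = ∫ x, p.eval x * h x := by
    simp only [S, sq]
    exact hpL ⟨p, hp⟩
  have hS : S ≤ √S * (C * I) :=
    calc S ≤ ∫ x, |p.eval x * h x| := hself ▸ (le_abs_self _).trans abs_integral_le_integral_abs
      _ ≤ ∫ x, C * √S * |max 1 |x| ^ m * h x| := by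
        refine integral_mono (hint ⟨p, hp⟩).abs (hh.abs.const_mul _) fun x ↦ ?_
        have hw : 0 ≤ max 1 |x| ^ m := by positivity
        simp only [abs_mul, abs_of_nonneg hw, ← mul_assoc]
        exact mul_le_mul_of_nonneg_right (hgrowth x) (abs_nonneg _)
      _ = √S * (C * I) := by rw [integral_const_mul]; ring
  have hnorm : √S ≤ C * I := by
    rcases (Real.sqrt_nonneg S).eq_or_lt with h0 | h0
    · rw [← h0]; exact mul_nonneg hC (integral_nonneg fun _ ↦ abs_nonneg _)
    · exact le_of_mul_le_mul_left ((Real.mul_self_sqrt (Real.sqrt_pos.1 h0).le).trans_le hS) h0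
  refine ⟨p, fun i hi ↦ ?_, fun x hx ↦ ?_⟩
  · have hXi : (X ^ i : ℝ[X]) ∈ degreeLT ℝ (m + 1) := by
      rw [mem_degreeLT, degree_X_pow]; exact_mod_cast Nat.lt_succ_of_le hi
    simpa [polynomialL2Form_apply, L, mul_comm] using hpL ⟨X ^ i, hXi⟩
  · calc |p.eval x| ≤ C * √S := by simpa [max_eq_left hx] using hgrowth x
      _ ≤ C * (C * I) := by gcongr
      _ = C ^ 2 * I := by ring

lemma integral_pow_mul_add_ite_eval {g : ℝ → ℝ} {i : ℕ} (hg : Integrable fun x ↦ x ^ i * g x)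
    (p : ℝ[X]) :
    ∫ x, x ^ i * (g x + if |x| ≤ 1 then p.eval x else 0) =
      (∫ x, x ^ i * g x) + ∫ x in (-1 : ℝ)..1, x ^ i * p.eval x := by
  have hind : (fun x : ℝ ↦ x ^ i * if |x| ≤ 1 then p.eval x else 0) =
      (Set.Icc (-1) 1).indicator fun x ↦ x ^ i * p.eval x := by
    ext x
    simp [Set.indicator, ← abs_le]
  have hpint : Integrable fun x : ℝ ↦ x ^ i * if |x| ≤ 1 then p.eval x else 0 := by
    rw [hind, integrable_indicator_iff measurableSet_Icc]
    exact Continuous.integrableOn_Icc (by fun_prop)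
  simp_rw [mul_add]
  rw [integral_add hg hpint, hind, integral_indicator measurableSet_Icc,
    integral_Icc_eq_integral_Ioc, intervalIntegral.integral_of_le (by norm_num)]

end PolynomialMoments

section ExpBounds

lemma abs_exp_sub_one_le_abs_mul_exp_abs (t : ℝ) : |Real.exp t - 1| ≤ |t| * Real.exp |t| := by
  have h := Complex.norm_exp_sub_sum_le_norm_mul_exp t 1
  simp only [Finset.sum_range_one, pow_zero, Nat.factorial_zero, Nat.cast_one, div_one, pow_one,
    Complex.norm_real, Real.norm_eq_abs] at h
  exact_mod_cast h

/-- `y² / log y` is essentially increasing, so what bounds `m` at `B` bounds it at `y ≥ B / 2`. -/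
lemma pow_le_exp_sq_div {B y : ℝ} {m : ℕ} (hB : Real.exp 1 ≤ B) (hy : B / 2 ≤ y)
    (hm : m * Real.log B ≤ B ^ 2 / 1024) : y ^ m ≤ Real.exp (y ^ 2 / 16) := by
  have hB0 : 0 < B := (Real.exp_pos 1).trans_le hB
  have hy0 : 0 < y := by linarith
  have hm' : (m : ℝ) ≤ B ^ 2 / 1024 :=
    (le_mul_of_one_le_right m.cast_nonneg ((Real.le_log_iff_exp_le hB0).2 hB)).trans hm
  have hlog : Real.log y ≤ Real.log B + y / B := by
    have h := Real.log_le_sub_one_of_pos (div_pos hy0 hB0)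
    rw [Real.log_div hy0.ne' hB0.ne'] at h
    linarith
  rw [← Real.log_le_iff_le_exp (by positivity), Real.log_pow]
  calc m * Real.log y ≤ m * (Real.log B + y / B) := by gcongr
    _ = m * Real.log B + m * (y / B) := mul_add _ _ _
    _ ≤ B ^ 2 / 1024 + B ^ 2 / 1024 * (y / B) := by gcongr
    _ = B ^ 2 / 1024 + B * y / 1024 := by field_simp
    _ ≤ y ^ 2 / 16 := by nlinarith

lemma nikolskiiConst_sq_le_exp {B : ℝ} {m : ℕ} (hB : 1000 ≤ B)
    (hm : m * Real.log B ≤ B ^ 2 / 1024) : nikolskiiConst m ^ 2 ≤ Real.exp (B ^ 2 / 64) := by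
  have hlog1 : 1 ≤ Real.log B := by
    rw [Real.le_log_iff_exp_le (by linarith)]
    linarith [Real.exp_one_lt_d9]
  have hlogB : Real.log B ≤ B := Real.log_le_self (by linarith)
  have hm' : (m : ℝ) ≤ B ^ 2 / 1024 := (le_mul_of_one_le_right m.cast_nonneg hlog1).trans hm
  have hbase : Real.log (2 * (m + 1)) ≤ 2 * Real.log B := by
    rw [← Nat.cast_two, ← Real.log_pow]
    exact Real.log_le_log (by positivity) (by push_cast; nlinarith)
  rw [nikolskiiConst, ← pow_mul, ← Real.log_le_iff_le_exp (by positivity), Real.log_pow]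
  push_cast
  calc (m + 2) * 2 * Real.log (2 * (m + 1)) ≤ (m + 2) * 2 * (2 * Real.log B) := by gcongr
    _ = 4 * (m * Real.log B) + 8 * Real.log B := by ring
    _ ≤ 4 * (B ^ 2 / 1024) + 8 * B := by gcongr
    _ ≤ B ^ 2 / 64 := by nlinarith

lemma div_two_mul_le_Bconst {ε δ : ℝ} (hε : ε ≤ 1) (hδ : 0 < δ) : ε / (2 * δ) ≤ Bconst ε δ := by
  have hpos : 0 < 1 - ε / 2 := by linarith
  have hratio : 1 + ε / 2 / (1 - ε / 2) = (1 - ε / 2)⁻¹ := by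
    rw [one_add_div hpos.ne', sub_add_cancel, one_div]
  have hlog : ε / 2 ≤ Real.log (1 - ε / 2)⁻¹ := by
    rw [Real.log_inv]
    linarith [Real.log_le_sub_one_of_pos hpos]
  rw [Bconst, hratio, one_div_mul_eq_div, ← div_div]
  gcongr

end ExpBounds

section Gaussian

lemma gaussPDF_eq_gaussianPDFReal : gaussPDF = ProbabilityTheory.gaussianPDFReal 0 1 := by
  ext x
  simp [gaussPDF, ProbabilityTheory.gaussianPDFReal, div_eq_inv_mul]

lemma measurable_gaussPDF : Measurable gaussPDF :=
  gaussPDF_eq_gaussianPDFReal ▸ ProbabilityTheory.measurable_gaussianPDFReal 0 1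

lemma gaussPDF_pos (x : ℝ) : 0 < gaussPDF x := by
  unfold gaussPDF; positivity

lemma integral_gaussPDF : ∫ x, gaussPDF x = 1 :=
  gaussPDF_eq_gaussianPDFReal ▸ ProbabilityTheory.integral_gaussianPDFReal_eq_one 0 one_ne_zero

lemma integrable_pow_mul_gaussPDF (i : ℕ) : Integrable fun x ↦ x ^ i * gaussPDF x := by
  have h := integrable_rpow_mul_exp_neg_mul_sq (b := 1 / 2) (by norm_num) (s := i)
    (neg_one_lt_zero.trans_le i.cast_nonneg)
  refine (h.div_const (√(2 * Real.pi))).congr (.of_forall fun x ↦ ?_)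
  simp only [gaussPDF, Real.rpow_natCast, mul_div_assoc]
  ring_nf

lemma gaussPDF_sub (x δ : ℝ) :
    gaussPDF (x - δ) = gaussPDF x * Real.exp (x * δ - δ ^ 2 / 2) := by
  rw [gaussPDF, gaussPDF, div_mul_eq_mul_div, ← Real.exp_add]
  ring_nf

lemma gaussPDF_le_exp (x : ℝ) : gaussPDF x ≤ Real.exp (-x ^ 2 / 2) := by
  refine div_le_self (Real.exp_pos _).le ?_
  rw [Real.one_le_sqrt]
  linarith [Real.pi_gt_three]

lemma three_div_twenty_le_gaussPDF {x : ℝ} (hx : |x| ≤ 1) : 3 / 20 ≤ gaussPDF x := by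
  have hx2 : x ^ 2 ≤ 1 := (sq_le_one_iff_abs_le_one x).2 hx
  have hexp : 1 / 2 ≤ Real.exp (-x ^ 2 / 2) := by linarith [Real.add_one_le_exp (-x ^ 2 / 2)]
  have hsqrt : √(2 * Real.pi) ≤ 10 / 3 := by
    rw [Real.sqrt_le_left (by norm_num)]
    linarith [Real.pi_lt_four]
  rw [gaussPDF, le_div_iff₀ (by positivity)]
  linarith

lemma abs_mul_sub_sq_div_two_le {δ : ℝ} (hδ : 0 ≤ δ) (hδ2 : δ ≤ 2) (x : ℝ) :
    |x * δ - δ ^ 2 / 2| ≤ δ * (|x| + 1) := by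
  calc |x * δ - δ ^ 2 / 2| ≤ |x * δ| + |δ ^ 2 / 2| := abs_sub _ _
    _ = δ * (|x| + δ / 2) := by
      rw [abs_mul, abs_of_nonneg hδ, abs_of_nonneg (by positivity : 0 ≤ δ ^ 2 / 2)]; ring
    _ ≤ δ * (|x| + 1) := by gcongr; linarith

end Gaussian

section Corruption

/-- `f` is the density of the visible part of an `ε`-corruption of `N(δ, 1)`: each sample is hidden
with some probability at most `ε` that may depend on its value. -/
def IsCorruption (ε δ : ℝ) (f : ℝ → ℝ) : Prop :=
  ∀ x, (1 - ε) * gaussPDF (x - δ) ≤ f x ∧ f x ≤ gaussPDF (x - δ)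

/-- The gap between the target `(1 - ε/2) φ` and `g`, whose moments the polynomial correction of `g`
has to supply. -/
noncomputable def gaussDefect (ε : ℝ) (g : ℝ → ℝ) (x : ℝ) : ℝ := (1 - ε / 2) * gaussPDF x - g x

variable {ε δ B : ℝ} {m : ℕ} {g : ℝ → ℝ}

namespace IsCorruption

lemma abs_gaussDefect_le (hg : IsCorruption ε δ g) (hδ : 0 ≤ δ) (hδε : δ ≤ ε) (hε : ε ≤ 1)
    (x : ℝ) : |gaussDefect ε g x| ≤ ε * Real.exp (2 * (|x| + 1)) * gaussPDF x := by
  set s := |x| + 1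
  set t := x * δ - δ ^ 2 / 2
  have hs : 1 ≤ s := le_add_of_nonneg_left (abs_nonneg x)
  have hε0 : 0 ≤ ε := hδ.trans hδε
  have hts : |t| ≤ ε * s :=
    (abs_mul_sub_sq_div_two_le hδ (by linarith) x).trans (by gcongr)
  have hexp_abs : Real.exp |t| ≤ Real.exp s :=
    Real.exp_le_exp.2 (hts.trans (mul_le_of_le_one_left (by linarith) hε))
  have hexp : Real.exp t ≤ Real.exp s := (Real.exp_le_exp.2 (le_abs_self t)).trans hexp_abs
  have hsub : |Real.exp t - 1| ≤ ε * (s * Real.exp s) :=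
    calc |Real.exp t - 1| ≤ |t| * Real.exp |t| := abs_exp_sub_one_le_abs_mul_exp_abs t
      _ ≤ ε * s * Real.exp s := by gcongr
      _ = ε * (s * Real.exp s) := mul_assoc _ _ _
  have hsum : ε * (s * Real.exp s) + ε * Real.exp s ≤ ε * Real.exp (2 * s) :=
    calc ε * (s * Real.exp s) + ε * Real.exp s = ε * ((s + 1) * Real.exp s) := by ring
      _ ≤ ε * (Real.exp s * Real.exp s) := mul_le_mul_of_nonneg_left
        (mul_le_mul_of_nonneg_right (Real.add_one_le_exp s) (Real.exp_pos s).le) hε0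
      _ = ε * Real.exp (2 * s) := by rw [← Real.exp_add, ← two_mul]
  have hscaled : ε * Real.exp t ≤ ε * Real.exp s := by gcongr
  have hone : ε * 1 ≤ ε * Real.exp s := by gcongr; exact Real.one_le_exp (by linarith)
  obtain ⟨hlo, hup⟩ := hg x
  rw [gaussPDF_sub] at hlo hup
  have hφ := gaussPDF_pos x
  obtain ⟨hsub_lo, hsub_up⟩ := abs_le.1 hsub
  rw [gaussDefect, abs_le]
  constructor
  · have : Real.exp t - (1 - ε / 2) ≤ ε * Real.exp (2 * s) := by linarith
    nlinarith
  · have : 1 - ε / 2 - (1 - ε) * Real.exp t ≤ ε * Real.exp (2 * s) := by linarith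
    nlinarith

lemma abs_gaussDefect_le_exp_sq (hg : IsCorruption ε δ g) (hδ : 0 ≤ δ) (hδε : δ ≤ ε) (hε : ε ≤ 1)
    {x : ℝ} (hx : 10 ≤ |x|) : |gaussDefect ε g x| ≤ ε * Real.exp (-x ^ 2 / 4) := by
  have hε0 : 0 ≤ ε := hδ.trans hδε
  calc |gaussDefect ε g x| ≤ ε * Real.exp (2 * (|x| + 1)) * gaussPDF x :=
        hg.abs_gaussDefect_le hδ hδε hε x
    _ ≤ ε * Real.exp (2 * (|x| + 1)) * Real.exp (-x ^ 2 / 2) := by gcongr; exact gaussPDF_le_exp x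
    _ = ε * Real.exp (2 * (|x| + 1) + -x ^ 2 / 2) := by rw [mul_assoc, ← Real.exp_add]
    _ ≤ ε * Real.exp (-x ^ 2 / 4) := by
      gcongr
      nlinarith [sq_abs x]

lemma abs_weighted_gaussDefect_le (hg : IsCorruption ε δ g) (hδ : 0 ≤ δ) (hδε : δ ≤ ε) (hε : ε ≤ 1)
    (hB : 20 ≤ B) (hm : m * Real.log B ≤ B ^ 2 / 1024)
    (hzero : ∀ x, |x| < B / 2 → gaussDefect ε g x = 0) (x : ℝ) :
    |max 1 |x| ^ m * gaussDefect ε g x| ≤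
      ε * Real.exp (-B ^ 2 / 32) * Real.exp (-(1 / 16) * x ^ 2) := by
  have hε0 : 0 ≤ ε := hδ.trans hδε
  rcases lt_or_ge |x| (B / 2) with hx | hx
  · rw [hzero x hx, mul_zero, abs_zero]; positivity
  have hx2 : B ^ 2 / 4 ≤ x ^ 2 := by rw [← sq_abs x]; nlinarith
  have hpow : |x| ^ m ≤ Real.exp (x ^ 2 / 16) :=
    sq_abs x ▸ pow_le_exp_sq_div (by linarith [Real.exp_one_lt_three]) hx hm
  rw [max_eq_right (by linarith), abs_mul, abs_pow, abs_abs]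
  calc |x| ^ m * |gaussDefect ε g x| ≤ Real.exp (x ^ 2 / 16) * (ε * Real.exp (-x ^ 2 / 4)) := by
        gcongr
        exact hg.abs_gaussDefect_le_exp_sq hδ hδε hε (by linarith)
    _ = ε * Real.exp (x ^ 2 / 16 + -x ^ 2 / 4) := by rw [Real.exp_add]; ring
    _ ≤ ε * Real.exp (-B ^ 2 / 32 + -(1 / 16) * x ^ 2) :=
        mul_le_mul_of_nonneg_left (Real.exp_le_exp.2 (by linarith)) hε0
    _ = ε * Real.exp (-B ^ 2 / 32) * Real.exp (-(1 / 16) * x ^ 2) := by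
      rw [Real.exp_add, mul_assoc]

lemma integrable_weighted_gaussDefect (hg : IsCorruption ε δ g) (hgm : AEStronglyMeasurable g)
    (hδ : 0 ≤ δ) (hδε : δ ≤ ε) (hε : ε ≤ 1) (hB : 20 ≤ B) (hm : m * Real.log B ≤ B ^ 2 / 1024)
    (hzero : ∀ x, |x| < B / 2 → gaussDefect ε g x = 0) :
    Integrable fun x ↦ max 1 |x| ^ m * gaussDefect ε g x := by
  refine ((integrable_exp_neg_mul_sq (by norm_num)).const_mul _).mono' ?_
    (.of_forall (hg.abs_weighted_gaussDefect_le hδ hδε hε hB hm hzero))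
  exact (Measurable.aestronglyMeasurable (by fun_prop)).mul
    ((measurable_gaussPDF.const_mul _).aestronglyMeasurable.sub hgm)

lemma integral_weighted_gaussDefect_le (hg : IsCorruption ε δ g) (hδ : 0 ≤ δ)
    (hδε : δ ≤ ε) (hε : ε ≤ 1) (hB : 20 ≤ B) (hm : m * Real.log B ≤ B ^ 2 / 1024)
    (hzero : ∀ x, |x| < B / 2 → gaussDefect ε g x = 0) :
    ∫ x, |max 1 |x| ^ m * gaussDefect ε g x| ≤ 8 * ε * Real.exp (-B ^ 2 / 32) := by
  have hε0 : 0 ≤ ε := hδ.trans hδε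
  calc ∫ x, |max 1 |x| ^ m * gaussDefect ε g x|
      ≤ ∫ x : ℝ, ε * Real.exp (-B ^ 2 / 32) * Real.exp (-(1 / 16) * x ^ 2) :=
        integral_mono_of_nonneg (.of_forall fun _ ↦ abs_nonneg _)
          ((integrable_exp_neg_mul_sq (by norm_num)).const_mul _)
          (.of_forall (hg.abs_weighted_gaussDefect_le hδ hδε hε hB hm hzero))
    _ = ε * Real.exp (-B ^ 2 / 32) * √(Real.pi / (1 / 16)) := by
        rw [integral_const_mul, integral_gaussian]
    _ ≤ ε * Real.exp (-B ^ 2 / 32) * 8 := by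
        gcongr
        rw [Real.sqrt_le_left (by norm_num)]
        linarith [Real.pi_lt_four]
    _ = 8 * ε * Real.exp (-B ^ 2 / 32) := by ring

end IsCorruption

lemma corruption_bounds_of_abs_le {x q : ℝ} (hε : ε ≤ 1) (hδ : 0 ≤ δ) (hδε : 40 * δ ≤ ε)
    (hx : |x| ≤ 1) (hq : |q| ≤ ε / 20) :
    (1 - ε) * gaussPDF (x - δ) ≤ (1 - ε / 2) * gaussPDF x + q ∧
      (1 - ε / 2) * gaussPDF x + q ≤ gaussPDF (x - δ) := by
  set t := x * δ - δ ^ 2 / 2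
  have ht : |t| ≤ 2 * δ := (abs_mul_sub_sq_div_two_le hδ (by linarith) x).trans (by nlinarith)
  have hexp : |Real.exp t - 1| ≤ ε / 10 :=
    (Real.abs_exp_sub_one_le (by linarith)).trans (by linarith)
  have hφ := three_div_twenty_le_gaussPDF hx
  have hqφ : |q| ≤ ε / 3 * gaussPDF x := hq.trans (by nlinarith)
  obtain ⟨hexp_lo, hexp_up⟩ := abs_le.1 hexp
  obtain ⟨hq_lo, hq_up⟩ := abs_le.1 hqφ
  rw [gaussPDF_sub]
  constructor
  · have : (1 - ε) * Real.exp t ≤ 1 - ε / 2 - ε / 3 := by nlinarith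
    nlinarith
  · have : 1 - ε / 2 + ε / 3 ≤ Real.exp t := by linarith
    nlinarith

lemma IsCorruption.add_ite (hg : IsCorruption ε δ g) (hε : ε ≤ 1) (hδ : 0 ≤ δ) (hδε : 40 * δ ≤ ε)
    (hzero : ∀ x, |x| ≤ 1 → gaussDefect ε g x = 0) {q : ℝ → ℝ}
    (hq : ∀ x, |x| ≤ 1 → |q x| ≤ ε / 20) :
    IsCorruption ε δ fun x ↦ g x + if |x| ≤ 1 then q x else 0 := by
  intro x
  by_cases hx : |x| ≤ 1
  · simpa only [if_pos hx, ← sub_eq_zero.1 (hzero x hx)] using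
      corruption_bounds_of_abs_le hε hδ hδε hx (hq x hx)
  · simpa only [if_neg hx, add_zero] using hg x

lemma integrable_pow_mul_of_gaussDefect {i : ℕ}
    (h : Integrable fun x ↦ x ^ i * gaussDefect ε g x) : Integrable fun x ↦ x ^ i * g x := by
  refine (((integrable_pow_mul_gaussPDF i).const_mul (1 - ε / 2)).sub h).congr
    (.of_forall fun x ↦ ?_)
  simp only [gaussDefect, Pi.sub_apply]
  ring

lemma integral_pow_mul_add_integral_pow_mul_gaussDefect {i : ℕ}
    (h : Integrable fun x ↦ x ^ i * gaussDefect ε g x) :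
    (∫ x, x ^ i * g x) + ∫ x, x ^ i * gaussDefect ε g x =
      (1 - ε / 2) * ∫ x, x ^ i * gaussPDF x := by
  rw [← integral_add (integrable_pow_mul_of_gaussDefect h) h, ← integral_const_mul]
  refine integral_congr_ae (.of_forall fun x ↦ ?_)
  simp only [gaussDefect]
  ring

lemma exp_sq_div_mul_exp_neg_sq_div_le (hε : 0 ≤ ε) (hB : 1000 ≤ B) :
    Real.exp (B ^ 2 / 64) * (8 * ε * Real.exp (-B ^ 2 / 32)) ≤ ε / 20 := by
  have hexp : 160 ≤ Real.exp (B ^ 2 / 64) := by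
    nlinarith [Real.add_one_le_exp (B ^ 2 / 64)]
  have hsplit : Real.exp (B ^ 2 / 64) * Real.exp (-B ^ 2 / 32) = (Real.exp (B ^ 2 / 64))⁻¹ := by
    rw [← Real.exp_add, ← Real.exp_neg]
    ring_nf
  calc Real.exp (B ^ 2 / 64) * (8 * ε * Real.exp (-B ^ 2 / 32))
      = 8 * ε * (Real.exp (B ^ 2 / 64))⁻¹ := by rw [← hsplit]; ring
    _ ≤ 8 * ε * 160⁻¹ := by gcongr
    _ = ε / 20 := by ring

theorem IsCorruption.exists_polynomial_moments_eq (hg : IsCorruption ε δ g)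
    (hgm : AEStronglyMeasurable g) (hε : ε ≤ 1) (hδ : 0 ≤ δ) (hδε : 40 * δ ≤ ε) (hB : 1000 ≤ B)
    (hm : m * Real.log B ≤ B ^ 2 / 1024) (hzero : ∀ x, |x| < B / 2 → gaussDefect ε g x = 0) :
    ∃ p : Polynomial ℝ, IsCorruption ε δ (fun x ↦ g x + if |x| ≤ 1 then p.eval x else 0) ∧
      ∀ i ≤ m, ∫ x, x ^ i * (g x + if |x| ≤ 1 then p.eval x else 0) =
        (1 - ε / 2) * ∫ x, x ^ i * gaussPDF x := by
  have hδε' : δ ≤ ε := by linarith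
  have hint := hg.integrable_weighted_gaussDefect hgm hδ hδε' hε (by linarith) hm hzero
  obtain ⟨p, hpmom, hpbound⟩ := exists_polynomial_moments_eq_abs_le hint
  have hpsmall (x : ℝ) (hx : |x| ≤ 1) : |p.eval x| ≤ ε / 20 :=
    calc |p.eval x| ≤ nikolskiiConst m ^ 2 * ∫ y, |max 1 |y| ^ m * gaussDefect ε g y| :=
          hpbound x hx
      _ ≤ Real.exp (B ^ 2 / 64) * (8 * ε * Real.exp (-B ^ 2 / 32)) :=
          mul_le_mul (nikolskiiConst_sq_le_exp hB hm)
            (hg.integral_weighted_gaussDefect_le hδ hδε' hε (by linarith) hm hzero)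
            (integral_nonneg fun _ ↦ abs_nonneg _) (Real.exp_pos _).le
      _ ≤ ε / 20 := exp_sq_div_mul_exp_neg_sq_div_le (hδ.trans hδε') hB
  refine ⟨p, hg.add_ite hε hδ hδε (fun x hx ↦ hzero x (by linarith)) hpsmall, fun i hi ↦ ?_⟩
  have hinti : Integrable fun x ↦ x ^ i * gaussDefect ε g x := by
    simpa using integrable_eval_mul hint (p := Polynomial.X ^ i)
      (by rw [Polynomial.degree_X_pow]; exact_mod_cast Nat.lt_succ_of_le hi)
  rw [integral_pow_mul_add_ite_eval (integrable_pow_mul_of_gaussDefect hinti), hpmom i hi,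
    integral_pow_mul_add_integral_pow_mul_gaussDefect hinti]

end Corruption

theorem stmt2_general :
    ∃ c c' : ℝ, 0 < c ∧ 0 < c' ∧
      ∀ ε δ : ℝ, ε ≤ 1 → δ ∈ Set.Ioo 0 (c' * ε) →
        ∀ g : ℝ → ℝ, AEStronglyMeasurable g → IsCorruption ε δ g →
          (∀ x ∈ Set.Icc (-(Bconst ε δ) + δ / 2) (Bconst ε δ + δ / 2),
            g x = (1 - ε / 2) * gaussPDF x) →
          ∃ p : Polynomial ℝ,
            IsCorruption ε δ (fun x ↦ g x + if |x| ≤ 1 then p.eval x else 0) ∧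
            ∀ i ≤ ⌊c * (Bconst ε δ) ^ 2 / Real.log (Bconst ε δ)⌋₊,
              (∫ x : ℝ, x ^ i * (g x + if |x| ≤ 1 then p.eval x else 0)) /
                  (∫ x : ℝ, g x + if |x| ≤ 1 then p.eval x else 0) =
                ∫ z : ℝ, z ^ i * gaussPDF z := by
  refine ⟨1 / 1024, 1 / 2000, by norm_num, by norm_num,
    fun ε δ hε1 ⟨hδ0, hδε⟩ g hgm hg hgB ↦ ?_⟩
  set B := Bconst ε δ
  have hB : 1000 ≤ B :=
    calc 1000 ≤ ε / (2 * δ) := by rw [le_div_iff₀ (by positivity)]; linarith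
      _ ≤ B := div_two_mul_le_Bconst hε1 hδ0
  have hm : ⌊1 / 1024 * B ^ 2 / Real.log B⌋₊ * Real.log B ≤ B ^ 2 / 1024 := by
    have hlog : 0 < Real.log B := Real.log_pos (by linarith)
    have hfloor := Nat.floor_le (by positivity : 0 ≤ 1 / 1024 * B ^ 2 / Real.log B)
    rw [le_div_iff₀ hlog] at hfloor
    linarith
  have hzero (x : ℝ) (hx : |x| < B / 2) : gaussDefect ε g x = 0 := by
    obtain ⟨hx_lo, hx_up⟩ := abs_lt.1 hx
    exact sub_eq_zero.2 (hgB x ⟨by linarith, by linarith⟩).symm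
  obtain ⟨p, hp, hmom⟩ :=
    hg.exists_polynomial_moments_eq hgm hε1 hδ0.le (by linarith) hB hm hzero
  have hmass : ∫ x, (g x + if |x| ≤ 1 then p.eval x else 0) = 1 - ε / 2 := by
    simpa [integral_gaussPDF] using hmom 0 (Nat.zero_le _)
  refine ⟨p, hp, fun i hi ↦ ?_⟩
  rw [hmom i hi, hmass, mul_div_cancel_left₀ _ (by linarith)]

/-- There exist absolute constants `c, c' > 0` such that for `ε ∈ (0,1)`, `δ ∈ (0, c'ε)`,
if `g` is as produced in the first step (sandwiched between `(1−ε)·φ(·−δ)` and `φ(·−δ)`,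
with total integral `1−ε/2`, equal to `(1−ε/2)·φ` on `[−B+δ/2, B+δ/2]`), then there is a
polynomial `p` so that `f(x) = g(x) + p(x)·1{|x| ≤ 1}` is still a valid `ε`-corruption of
`N(δ,1)` and its visible-sample distribution matches the first `m = ⌊c·γ²/log γ⌋`
moments of `N(0,1)`. -/
theorem stmt2 :
    ∃ c c' : ℝ, 0 < c ∧ 0 < c' ∧
      ∀ ε δ : ℝ, ε ∈ Set.Ioo (0 : ℝ) 1 → δ ∈ Set.Ioo 0 (c' * ε) →
        ∀ g : ℝ → ℝ, Measurable g → (∀ x : ℝ, 0 ≤ g x) →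
          (∀ x : ℝ, (1 - ε) * gaussPDF (x - δ) ≤ g x ∧ g x ≤ gaussPDF (x - δ)) →
          (∫ x : ℝ, g x) = 1 - ε / 2 →
          (∀ x ∈ Set.Icc (-(Bconst ε δ) + δ / 2) (Bconst ε δ + δ / 2),
            g x = (1 - ε / 2) * gaussPDF x) →
          ∃ p : Polynomial ℝ,
            (∀ x : ℝ,
              (1 - ε) * gaussPDF (x - δ) ≤ g x + (if |x| ≤ 1 then p.eval x else 0) ∧
              g x + (if |x| ≤ 1 then p.eval x else 0) ≤ gaussPDF (x - δ)) ∧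
            ∀ i : ℕ, 1 ≤ i →
              i ≤ ⌊c * (Bconst ε δ) ^ 2 / Real.log (Bconst ε δ)⌋₊ →
              (∫ x : ℝ, x ^ i * (g x + (if |x| ≤ 1 then p.eval x else 0))) /
                  (∫ x : ℝ, g x + (if |x| ≤ 1 then p.eval x else 0)) =
                ∫ z : ℝ, z ^ i * gaussPDF z := by
  obtain ⟨c, c', hc, hc', H⟩ := stmt2_general
  exact ⟨c, c', hc, hc', fun ε δ hε hδ g hgm _ hg _ hgB ↦
    (H ε δ hε.2.le hδ g hgm.aestronglyMeasurable hg hgB).imp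
      fun p hp ↦ ⟨hp.1, fun i _ hi ↦ hp.2 i hi⟩⟩
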